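/- Let n ≥ 1, let O be a real orthogonal n×n matrix, W_r a real n×n matrix, W_in a real n×m matrix, ρ, ω real numbers, β ∈ (0,1], and set σ = ‖ρ·W_r‖ (operator norm induced by the Euclidean norm). Assume σ < 1. Let u : ℕ → ℝ^m be any input sequence, and let x, x' : ℕ → ℝ^n be two state trajectories satisfying the ES²N update x[t] = β·tanh(ρ·W_r·x[t−1] + ω·W_in·u[t]) + (1−β)·O·x[t−1] (and likewise for x') with arbitrary initial conditions x[0], x'[0]. Then for every T ≥ 0, ‖x[T] − x'[T]‖ ≤ (1 − β(1−σ))^T · ‖x[0] − x'[0]‖; in particular, ‖x[T] − x'[T]‖ → 0 as T → ∞ (the echo state property holds for all inputs). -/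

import Mathlib

open Matrix Filter

theorem es2n_tanh_lip (a b : ℝ) : |Real.tanh a - Real.tanh b| ≤ |a - b| := by
  have hd : ∀ y ∈ (Set.univ : Set ℝ),
      HasDerivWithinAt Real.tanh (1 / Real.cosh y ^ 2) Set.univ y := by
    intro y _
    have hc := (Real.cosh_pos y).ne'
    have h := (Real.hasDerivAt_sinh y).div (Real.hasDerivAt_cosh y) hc
    have e : Real.tanh = Real.sinh / Real.cosh := by
      funext z
      exact Real.tanh_eq_sinh_div_cosh z
    rw [e]
    refine (h.congr_deriv ?_).hasDerivWithinAt
    congr 1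
    have := Real.cosh_sq y
    nlinarith
  have hb : ∀ y ∈ (Set.univ : Set ℝ), ‖1 / Real.cosh y ^ 2‖ ≤ 1 := by
    intro y _
    have h1 := Real.one_le_cosh y
    rw [Real.norm_eq_abs, abs_of_nonneg (by positivity)]
    exact div_le_one_of_le₀ (by nlinarith) (by positivity)
  have := convex_univ.norm_image_sub_le_of_norm_hasDerivWithin_le hd hb
    (Set.mem_univ b) (Set.mem_univ a)
  simpa using this

theorem es2n_orth {n : ℕ} (O : Matrix (Fin n) (Fin n) ℝ) (hO : Oᵀ * O = 1)
    (v : EuclideanSpace ℝ (Fin n)) : ‖Matrix.toEuclideanCLM (𝕜 := ℝ) O v‖ = ‖v‖ := by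
  have h : ∀ w : EuclideanSpace ℝ (Fin n), ‖w‖ ^ 2 = w.ofLp ⬝ᵥ w.ofLp := by
    intro w
    rw [EuclideanSpace.norm_sq_eq]
    simp [dotProduct, sq]
  have h2 : ‖Matrix.toEuclideanCLM (𝕜 := ℝ) O v‖ ^ 2 = ‖v‖ ^ 2 := by
    rw [h, h, Matrix.ofLp_toEuclideanCLM, Matrix.dotProduct_mulVec, ← Matrix.mulVec_transpose,
      Matrix.mulVec_mulVec, hO, Matrix.one_mulVec]
  exact (sq_eq_sq₀ (norm_nonneg _) (norm_nonneg _)).1 h2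

/-- Echo state property of the ES²N: if `σ = ‖ρ·W_r‖ < 1`, then any two trajectories driven by
the same input sequence contract at rate `1 − β(1−σ)` and hence synchronize. -/
theorem es2n_echo_state_property {n m : ℕ} (hn : 1 ≤ n)
    (O Wr : Matrix (Fin n) (Fin n) ℝ) (hO : Oᵀ * O = 1)
    (Win : Matrix (Fin n) (Fin m) ℝ) (ρ ω β σ : ℝ) (hβ : β ∈ Set.Ioc (0 : ℝ) 1)
    (hσ : σ = ‖Matrix.toEuclideanCLM (𝕜 := ℝ) (ρ • Wr)‖) (hσ1 : σ < 1)
    (u : ℕ → EuclideanSpace ℝ (Fin m)) (x x' : ℕ → EuclideanSpace ℝ (Fin n))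
    (hx : ∀ (t : ℕ) (i : Fin n),
      x (t + 1) i = β * Real.tanh ((ρ • Wr).mulVec (x t) i + (ω • Win).mulVec (u (t + 1)) i)
        + (1 - β) * O.mulVec (x t) i)
    (hx' : ∀ (t : ℕ) (i : Fin n),
      x' (t + 1) i = β * Real.tanh ((ρ • Wr).mulVec (x' t) i + (ω • Win).mulVec (u (t + 1)) i)
        + (1 - β) * O.mulVec (x' t) i) :
    (∀ T : ℕ, ‖x T - x' T‖ ≤ (1 - β * (1 - σ)) ^ T * ‖x 0 - x' 0‖) ∧
      Tendsto (fun T : ℕ => ‖x T - x' T‖) atTop (nhds 0) := by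
  obtain ⟨hβ0, hβ1⟩ := hβ
  have hσ0 : 0 ≤ σ := hσ ▸ norm_nonneg _
  have hq0 : 0 ≤ 1 - β * (1 - σ) := by nlinarith
  have hq1 : 1 - β * (1 - σ) < 1 := by nlinarith
  have step : ∀ t, ‖x (t + 1) - x' (t + 1)‖ ≤ (1 - β * (1 - σ)) * ‖x t - x' t‖ := by
    intro t
    let D : EuclideanSpace ℝ (Fin n) := WithLp.toLp 2 fun i =>
      Real.tanh ((ρ • Wr).mulVec (x t) i + (ω • Win).mulVec (u (t + 1)) i)
        - Real.tanh ((ρ • Wr).mulVec (x' t) i + (ω • Win).mulVec (u (t + 1)) i)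
    have hD : ‖D‖ ≤ σ * ‖x t - x' t‖ := by
      have h1 : ‖D‖ ≤ ‖Matrix.toEuclideanCLM (𝕜 := ℝ) (ρ • Wr) (x t - x' t)‖ := by
        rw [EuclideanSpace.norm_eq, EuclideanSpace.norm_eq]
        apply Real.sqrt_le_sqrt
        apply Finset.sum_le_sum
        intro i _
        apply pow_le_pow_left₀ (norm_nonneg _)
        refine (es2n_tanh_lip _ _).trans (le_of_eq ?_)
        rw [Matrix.ofLp_toEuclideanCLM, WithLp.ofLp_sub, Matrix.mulVec_sub, Real.norm_eq_abs,
          Pi.sub_apply]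
        congr 1
        ring
      rw [hσ]
      exact h1.trans (ContinuousLinearMap.le_opNorm _ _)
    have he : x (t + 1) - x' (t + 1) =
        β • D + (1 - β) • Matrix.toEuclideanCLM (𝕜 := ℝ) O (x t - x' t) := by
      ext i
      simp only [PiLp.sub_apply, PiLp.add_apply, PiLp.smul_apply, smul_eq_mul, hx, hx', D,
        Matrix.ofLp_toEuclideanCLM, WithLp.ofLp_sub, Matrix.mulVec_sub, Pi.sub_apply]
      ring
    rw [he]
    refine (norm_add_le _ _).trans ?_
    rw [norm_smul, norm_smul, es2n_orth O hO, Real.norm_of_nonneg hβ0.le,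
      Real.norm_of_nonneg (sub_nonneg.2 hβ1)]
    nlinarith [mul_le_mul_of_nonneg_left hD hβ0.le]
  have main : ∀ T : ℕ, ‖x T - x' T‖ ≤ (1 - β * (1 - σ)) ^ T * ‖x 0 - x' 0‖ := by
    intro T
    induction T with
    | zero => simp
    | succ k ih =>
      refine (step k).trans ((mul_le_mul_of_nonneg_left ih hq0).trans (le_of_eq ?_))
      ring
  refine ⟨main, squeeze_zero (fun _ => norm_nonneg _) main ?_⟩
  simpa using (tendsto_pow_atTop_nhds_zero_of_lt_one hq0 hq1).mul_const ‖x 0 - x' 0‖
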